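/- Let u : S¹ → ℝ be a smooth function with mean zero and let F = −u·u″ − H(u·H(u″)). Then for every θ ∈ S¹, F(θ) ≤ (1/π) ∫_{S¹} (Hu)(θ) · (u‴(θ) + u′(θ)) dθ + (π/2) ∫_{S¹} (u′(θ))² dθ. -/

import Mathlib

open MeasureTheory Real

/-- The `n`-th Fourier coefficient of a `2π`-periodic function `f : ℝ → ℝ`. -/
noncomputable def fourierC (f : ℝ → ℝ) (n : ℤ) : ℂ :=
  (1 / (2 * π)) * ∫ θ in (0:ℝ)..(2 * π), (f θ : ℂ) * Complex.exp (-Complex.I * (n : ℂ) * (θ : ℂ))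

/-- The Hilbert transform on the circle, sending `Σ cₙ e^{inθ}` to `Σ (−i sgn n) cₙ e^{inθ}`. -/
noncomputable def hilbertT (f : ℝ → ℝ) (θ : ℝ) : ℝ :=
  (∑' n : ℤ, -Complex.I * ((n.sign : ℤ) : ℂ) * fourierC f n *
    Complex.exp (Complex.I * (n : ℂ) * (θ : ℂ))).re

/-- The function `F = −u·u″ − H(u·H(u″))`. -/
noncomputable def Fmagic (u : ℝ → ℝ) (θ : ℝ) : ℝ :=
  -(u θ * deriv (deriv u) θ) - hilbertT (fun x => u x * hilbertT (deriv (deriv u)) x) θ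

/-!
Writing `u = ∑ cₙ e^{inθ}`, the function `F` is the double series
`∑ₙ ∑ₘ K(n, m) cₙ cₘ e^{i(n+m)θ}` with `K(n, m) = (1 - sgn (n + m) sgn m) m² ≥ 0`, so `F` is at most
`∑ₙ ∑ₘ K(n, m) |cₙ| |cₘ|`. The kernel vanishes for `|n| < |m|`. Hence enlarging the box
`|n|, |m| ≤ N` by one layer `p = N + 1` adds only `2 |c_p| (p² |c_p| + ∑_{|m| ≤ N} m² |cₘ|)`, which
AM-GM bounds by `2 p³ |c_p|² + p⁻² ∑_{|m| ≤ N} m⁴ |cₘ|²`. As `∑_{p > |m|} p⁻² ≤ 1 / |m|`, the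
layers sum to `F ≤ ∑ 2 |n|³ |cₙ|² = (1/π) ∫ (Hu) u‴`. The remaining term `∫ (Hu) u′` is nonpositive,
but no larger in absolute value than `∫ (u′)²`, and `1/π ≤ π/2`.
-/

section FourierAnalysis

open Complex (I)
open scoped ComplexConjugate

theorem fourier_two_pi_coe (n : ℤ) (x : ℝ) :
    fourier (T := 2 * π) n x = Complex.exp (I * n * x) := by
  rw [fourier_coe_apply]
  congr 1
  push_cast
  field_simp

theorem norm_fourier_apply {T : ℝ} (n : ℤ) (x : AddCircle T) : ‖fourier n x‖ = 1 :=
  Circle.norm_coe _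

theorem integral_fourier_two_pi (n : ℤ) :
    ∫ x in (0 : ℝ)..2 * π, fourier (T := 2 * π) n x = if n = 0 then 2 * (π : ℂ) else 0 := by
  split_ifs with hn
  · simp [hn]
  · have hexp : Complex.exp (I * n * (2 * π : ℝ)) = 1 :=
      Complex.exp_eq_one_iff.2 ⟨n, by push_cast; ring⟩
    simp only [fourier_two_pi_coe]
    rw [integral_exp_mul_complex (by simp [hn]), hexp]
    simp

theorem fourierC_eq_integral_fourier (f : ℝ → ℝ) (n : ℤ) :
    fourierC f n = 1 / (2 * π) * ∫ x in (0 : ℝ)..2 * π, fourier (T := 2 * π) (-n) x * f x := by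
  simp only [fourierC, fourier_two_pi_coe, Int.cast_neg, mul_neg, mul_comm]

theorem fourierC_eq_fourierCoeffOn (f : ℝ → ℝ) (n : ℤ) :
    fourierC f n = fourierCoeffOn two_pi_pos (fun x => (f x : ℂ)) n := by
  rw [fourierCoeffOn_eq_integral, fourierC_eq_integral_fourier, Complex.real_smul]
  push_cast [smul_eq_mul]
  rw [sub_zero, sub_zero]

theorem fourierC_neg (f : ℝ → ℝ) (n : ℤ) : fourierC f (-n) = conj (fourierC f n) := by
  rw [fourierC_eq_integral_fourier, fourierC_eq_integral_fourier, map_mul,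
    ← intervalIntegral.intervalIntegral_conj]
  simp [Complex.conj_ofNat]

theorem norm_fourierC_neg (f : ℝ → ℝ) (n : ℤ) : ‖fourierC f (-n)‖ = ‖fourierC f n‖ := by
  rw [fourierC_neg, Complex.norm_conj]

theorem fourierC_mul_fourierC_neg (f : ℝ → ℝ) (n : ℤ) :
    fourierC f n * fourierC f (-n) = (‖fourierC f n‖ ^ 2 : ℝ) := by
  rw [fourierC_neg, Complex.mul_conj, Complex.normSq_eq_norm_sq]

theorem hasSum_sq_norm_fourierC {f : ℝ → ℝ} (hf : Continuous f) :
    HasSum (fun n => 2 * π * ‖fourierC f n‖ ^ 2) (∫ x in (0 : ℝ)..2 * π, f x ^ 2) := by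
  have hL2 : MemLp (fun x => (f x : ℂ)) 2 (volume.restrict (Set.Ioc 0 (2 * π))) :=
    (memLp_two_iff_integrable_sq_norm (by fun_prop)).2
      (by fun_prop : Continuous fun x => ‖(f x : ℂ)‖ ^ 2).integrableOn_Ioc
  have h := (hasSum_sq_fourierCoeffOn two_pi_pos hL2).mul_left (2 * π)
  simp only [← fourierC_eq_fourierCoeffOn, Complex.norm_real, norm_eq_abs, sq_abs, sub_zero,
    smul_eq_mul, mul_inv_cancel_left₀ two_pi_pos.ne'] at h
  exact h

theorem periodic_deriv {𝕜 F : Type*} [NontriviallyNormedField 𝕜] [NormedAddCommGroup F]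
    [NormedSpace 𝕜 F] {f : 𝕜 → F} {c : 𝕜} (hf : Function.Periodic f c) :
    Function.Periodic (deriv f) c := fun x => by
  rw [← deriv_comp_add_const, hf.funext]

theorem fourierC_deriv {f : ℝ → ℝ} (hf : ContDiff ℝ 1 f) (hper : Function.Periodic f (2 * π))
    (n : ℤ) : fourierC (deriv f) n = I * n * fourierC f n := by
  have hderiv : ∀ x ∈ Set.uIcc 0 (2 * π), HasDerivAt (fun x => (f x : ℂ)) ((deriv f x : ℝ) : ℂ) x :=
    fun x _ => (hf.differentiable_one x).hasDerivAt.ofReal_comp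
  have hint : IntervalIntegrable (fun x => ((deriv f x : ℝ) : ℂ)) volume 0 (2 * π) :=
    (Complex.continuous_ofReal.comp hf.continuous_deriv_one).intervalIntegrable _ _
  have hends : f (2 * π) = f 0 := by simpa using hper 0
  rcases eq_or_ne n 0 with rfl | hn
  · rw [fourierC_eq_integral_fourier]
    simp [intervalIntegral.integral_eq_sub_of_hasDerivAt hderiv hint, hends]
  · rw [fourierC_eq_fourierCoeffOn f, fourierCoeffOn_of_hasDerivAt two_pi_pos hn hderiv hint,
      ← fourierC_eq_fourierCoeffOn, hends]
    simp only [sub_self, mul_zero, zero_sub, Complex.ofReal_mul, Complex.ofReal_ofNat,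
      Complex.ofReal_zero]
    field_simp
    ring

theorem fourierC_iterate_deriv {f : ℝ → ℝ} (hper : Function.Periodic f (2 * π)) (n : ℤ) :
    ∀ {k : ℕ}, ContDiff ℝ k f → fourierC (deriv^[k] f) n = (I * n) ^ k * fourierC f n
  | 0, _ => by simp
  | k + 1, hf => by
    have hderiv : ContDiff ℝ k (deriv f) := hf.deriv'
    rw [Function.iterate_succ_apply, fourierC_iterate_deriv (periodic_deriv hper) n hderiv,
      fourierC_deriv (hf.of_le (by simp)) hper]
    ring

theorem summable_norm_fourierC {f : ℝ → ℝ} (hf : ContDiff ℝ 1 f)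
    (hper : Function.Periodic f (2 * π)) : Summable fun n => ‖fourierC f n‖ := by
  have hsq : Summable fun n => ‖fourierC (deriv f) n‖ ^ 2 :=
    (summable_mul_left_iff two_pi_pos.ne').1
      (hasSum_sq_norm_fourierC hf.continuous_deriv_one).summable
  have hmaj := hsq.add (Real.summable_one_div_int_pow.2 one_lt_two)
  refine hmaj.of_norm_bounded_eventually ?_
  filter_upwards [Filter.eventually_cofinite_ne (0 : ℤ)] with n hn
  have hnorm : ‖fourierC f n‖ = ‖fourierC (deriv f) n‖ * |1 / (n : ℝ)| := by
    rw [fourierC_deriv hf hper, norm_mul, norm_mul, Complex.norm_I, Complex.norm_intCast,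
      abs_one_div]
    field_simp
  rw [norm_norm, hnorm, ← one_div_pow, ← sq_abs (1 / (n : ℝ))]
  nlinarith [sq_nonneg (‖fourierC (deriv f) n‖ - |1 / (n : ℝ)|),
    sq_nonneg ‖fourierC (deriv f) n‖, sq_nonneg |1 / (n : ℝ)|]

theorem hasSum_fourierC_mul_fourier {f : ℝ → ℝ} (hf : ContDiff ℝ 1 f)
    (hper : Function.Periodic f (2 * π)) (x : ℝ) :
    HasSum (fun n => fourierC f n * fourier (T := 2 * π) n x) (f x) := by
  have : Fact (0 < 2 * π) := ⟨two_pi_pos⟩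
  have hperC : Function.Periodic (fun x => (f x : ℂ)) (2 * π) := fun x => by simp [hper x]
  let g : C(AddCircle (2 * π), ℂ) :=
    ⟨hperC.lift, continuous_coinduced_dom.mpr (Complex.continuous_ofReal.comp hf.continuous)⟩
  have hcoeff : fourierCoeff g = fourierC f := funext fun n => by
    rw [fourierCoeff_eq_intervalIntegral g n 0, fourierC_eq_integral_fourier, zero_add,
      Complex.real_smul]
    push_cast
    rfl
  have hsum : Summable (fourierCoeff g) := hcoeff ▸ (summable_norm_fourierC hf hper).of_norm
  simpa only [hcoeff, smul_eq_mul] using! has_pointwise_sum_fourier_series_of_summable hsum x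

theorem ofReal_hilbertT (f : ℝ → ℝ) (x : ℝ) :
    (hilbertT f x : ℂ) =
      ∑' n : ℤ, -I * n.sign * fourierC f n * fourier (T := 2 * π) n x := by
  rw [hilbertT]
  simp only [← fourier_two_pi_coe]
  refine Complex.conj_eq_iff_re.1 ?_
  rw [Complex.conj_tsum, ← (Equiv.neg ℤ).tsum_eq]
  congr with n
  simp [fourierC_neg]

/-- `f` is the sum of the absolutely convergent trigonometric series `∑ i, a i * e^{I φ(i) x}`. The
frequencies `φ i` may repeat, so that a product of two series is again one, indexed by pairs. -/
structure HasTrigSeries {ι : Type*} (φ : ι → ℤ) (a : ι → ℂ) (f : ℝ → ℝ) : Prop where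
  summable_norm : Summable fun i => ‖a i‖
  hasSum (x : ℝ) : HasSum (fun i => a i * fourier (T := 2 * π) (φ i) x) (f x)

theorem hasTrigSeries_fourierC {f : ℝ → ℝ} (hf : ContDiff ℝ 1 f)
    (hper : Function.Periodic f (2 * π)) : HasTrigSeries id (fourierC f) f :=
  ⟨summable_norm_fourierC hf hper, hasSum_fourierC_mul_fourier hf hper⟩

theorem norm_neg_I_mul_sign_mul_le (n : ℤ) (z : ℂ) : ‖-I * n.sign * z‖ ≤ ‖z‖ := by
  rcases Int.sign_trichotomy n with h | h | h <;> simp [h]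

namespace HasTrigSeries

variable {ι κ : Type*} {φ : ι → ℤ} {ψ : κ → ℤ} {a : ι → ℂ} {b : κ → ℂ} {f g : ℝ → ℝ}

theorem summable_norm_mul_fourier (hf : HasTrigSeries φ a f) (x : ℝ) :
    Summable fun i => ‖a i * fourier (T := 2 * π) (φ i) x‖ := by
  simpa only [norm_mul, norm_fourier_apply, mul_one] using hf.summable_norm

theorem continuous (hf : HasTrigSeries φ a f) : Continuous f := by
  have hcont : Continuous fun x : ℝ => ∑' i, a i * fourier (T := 2 * π) (φ i) x :=
    continuous_tsum (fun i => by fun_prop) hf.summable_norm fun i x => by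
      rw [norm_mul, norm_fourier_apply, mul_one]
  simp only [(hf.hasSum _).tsum_eq] at hcont
  exact Complex.continuous_re.comp hcont

theorem neg (hf : HasTrigSeries φ a f) : HasTrigSeries φ (fun i => -a i) fun x => -f x where
  summable_norm := by simpa only [norm_neg] using hf.summable_norm
  hasSum x := by simpa only [neg_mul, Complex.ofReal_neg] using (hf.hasSum x).neg

theorem sub {b : ι → ℂ} (hf : HasTrigSeries φ a f) (hg : HasTrigSeries φ b g) :
    HasTrigSeries φ (fun i => a i - b i) fun x => f x - g x where
  summable_norm := (hf.summable_norm.add hg.summable_norm).of_nonneg_of_le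
    (fun _ => norm_nonneg _) fun _ => norm_sub_le _ _
  hasSum x := by
    simpa only [sub_mul, Complex.ofReal_sub] using (hf.hasSum x).sub (hg.hasSum x)

theorem mul (hf : HasTrigSeries φ a f) (hg : HasTrigSeries ψ b g) :
    HasTrigSeries (fun p : ι × κ => φ p.1 + ψ p.2) (fun p => a p.1 * b p.2)
      fun x => f x * g x where
  summable_norm := hf.summable_norm.mul_norm hg.summable_norm
  hasSum x := by
    have hsum := (hf.summable_norm_mul_fourier x).mul_norm (hg.summable_norm_mul_fourier x)
    simpa only [fourier_add, mul_mul_mul_comm, Complex.ofReal_mul] using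
      (hf.hasSum x).mul (hg.hasSum x) hsum.of_norm

theorem hasSum_integral_mul [Countable ι] (hf : HasTrigSeries φ a f) {g : ℝ → ℂ}
    (hg : IntervalIntegrable g volume 0 (2 * π)) :
    HasSum (fun i => a i * ∫ x in (0 : ℝ)..2 * π, fourier (T := 2 * π) (φ i) x * g x)
      (∫ x in (0 : ℝ)..2 * π, f x * g x) := by
  simp only [← intervalIntegral.integral_const_mul, ← mul_assoc]
  refine intervalIntegral.hasSum_integral_of_dominated_convergence (fun i x => ‖a i‖ * ‖g x‖)
    (fun i => ?_) (fun i => .of_forall fun x _ => ?_) (.of_forall fun x _ => ?_) ?_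
    (.of_forall fun x _ => (hf.hasSum x).mul_right (g x))
  · exact (Continuous.aestronglyMeasurable (by fun_prop)).mul
      (by simpa only [Set.uIoc_of_le two_pi_pos.le] using hg.1.aestronglyMeasurable)
  · rw [norm_mul, norm_mul, norm_fourier_apply, mul_one]
  · exact hf.summable_norm.mul_right _
  · simpa only [tsum_mul_right] using hg.norm.const_mul (∑' i, ‖a i‖)

theorem hasSum_fourierC [Countable ι] (hf : HasTrigSeries φ a f) (k : ℤ) :
    HasSum (fun i : φ ⁻¹' {k} => a i) (fourierC f k) := by
  refine hasSum_subtype_iff_indicator.2 ?_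
  rw [fourierC_eq_integral_fourier]
  have hint : IntervalIntegrable (fun x : ℝ => fourier (T := 2 * π) (-k) x) volume 0 (2 * π) :=
    Continuous.intervalIntegrable (by fun_prop) _ _
  have h := (hf.hasSum_integral_mul hint).mul_left (1 / (2 * π) : ℂ)
  simp only [← fourier_add, integral_fourier_two_pi, ← sub_eq_add_neg, sub_eq_zero] at h
  have hcoeff : (fun i => 1 / (2 * π) * (a i * if φ i = k then 2 * (π : ℂ) else 0)) =
      (φ ⁻¹' {k}).indicator a := funext fun i => by
    by_cases hi : φ i = k
    · rw [if_pos hi, Set.indicator_of_mem (show i ∈ φ ⁻¹' {k} from hi)]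
      field_simp
    · rw [if_neg hi, Set.indicator_of_notMem (show i ∉ φ ⁻¹' {k} from hi), mul_zero, mul_zero]
  rw [hcoeff] at h
  simpa only [Function.comp_def, mul_comm] using h

theorem hasSum_integral_mul_fourierC [Countable ι] (hf : HasTrigSeries φ a f)
    (hg : IntervalIntegrable g volume 0 (2 * π)) :
    HasSum (fun i => 2 * π * (a i * fourierC g (-φ i)))
      ((∫ x in (0 : ℝ)..2 * π, f x * g x : ℝ) : ℂ) := by
  have h := hf.hasSum_integral_mul (g := fun x => (g x : ℂ)) ⟨hg.1.ofReal, hg.2.ofReal⟩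
  rw [← intervalIntegral.integral_ofReal]
  push_cast
  convert h using 2 with i
  rw [fourierC_eq_integral_fourier, neg_neg]
  field_simp

protected theorem hilbertT [Countable ι] (hf : HasTrigSeries φ a f) :
    HasTrigSeries φ (fun i => -I * (φ i).sign * a i) (hilbertT f) := by
  have hsum : Summable fun i => ‖-I * (φ i).sign * a i‖ :=
    hf.summable_norm.of_nonneg_of_le (fun _ => norm_nonneg _)
      fun i => norm_neg_I_mul_sign_mul_le (φ i) (a i)
  refine ⟨hsum, fun x => ?_⟩
  have hS : Summable fun i => -I * (φ i).sign * a i * fourier (T := 2 * π) (φ i) x :=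
    .of_norm (by simpa only [norm_mul _ (fourier _ _), norm_fourier_apply, mul_one] using hsum)
  have hfiber (k : ℤ) : ∑' i : φ ⁻¹' {k},
      -I * (φ i).sign * a i * fourier (T := 2 * π) (φ i) x =
        -I * k.sign * fourierC f k * fourier (T := 2 * π) k x := by
    rw [← (((hf.hasSum_fourierC k).mul_left (-I * k.sign)).mul_right _).tsum_eq]
    exact tsum_congr fun ⟨i, hi⟩ => by rw [show φ i = k from hi]
  have hgroup := hS.hasSum.tsum_fiberwise φ
  simp only [hfiber] at hgroup
  rw [ofReal_hilbertT, hgroup.tsum_eq]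
  exact hS.hasSum

theorem le_of_sum_box_norm_le {φ : ℤ × ℤ → ℤ} {a : ℤ × ℤ → ℂ} (hf : HasTrigSeries φ a f) {B : ℝ}
    (hB : ∀ N : ℕ, ∑ n ∈ Finset.Icc (-N : ℤ) N, ∑ m ∈ Finset.Icc (-N : ℤ) N, ‖a (n, m)‖ ≤ B)
    (x : ℝ) : f x ≤ B := by
  have hboxes := (Complex.hasSum_re (hf.hasSum x)).comp <| Filter.tendsto_finsetProd_atTop.comp <|
    ((Finset.tendsto_Icc_neg (R := ℤ)).prod_atTop Finset.tendsto_Icc_neg).comp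
      Filter.tendsto_atTop_diagonal
  refine le_of_tendsto' hboxes fun N => le_trans ?_ (hB N)
  rw [← Finset.sum_product']
  refine Finset.sum_le_sum fun p _ => (Complex.re_le_norm _).trans_eq ?_
  rw [norm_mul, norm_fourier_apply, mul_one]

end HasTrigSeries

theorem hasSum_integral_hilbertT_mul_iterate_deriv {u : ℝ → ℝ} {k : ℕ}
    (hu : ContDiff ℝ (2 * k + 1 : ℕ) u) (hper : Function.Periodic u (2 * π)) :
    HasSum (fun n : ℤ => (-1) ^ (k + 1) * (2 * π * |(n : ℝ)| ^ (2 * k + 1) * ‖fourierC u n‖ ^ 2))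
      (∫ x in (0 : ℝ)..2 * π, hilbertT u x * deriv^[2 * k + 1] u x) := by
  have hcont : Continuous (deriv^[2 * k + 1] u) :=
    (ContDiff.iterate_deriv' 0 (2 * k + 1) (by simpa using hu)).continuous
  have h := (hasTrigSeries_fourierC (hu.of_le (by simp)) hper).hilbertT.hasSum_integral_mul_fourierC
    (hcont.intervalIntegrable 0 (2 * π))
  refine Complex.hasSum_ofReal.1 (h.congr_fun fun n => ?_)
  have hI : (-I) ^ (2 * k + 2) = (-1) ^ (k + 1) := by
    rw [show 2 * k + 2 = 2 * (k + 1) by ring, pow_mul, neg_sq, Complex.I_sq]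
  have habs : |(n : ℝ)| ^ (2 * k + 1) = n.sign * n ^ (2 * k + 1) := by
    rw [pow_succ, pow_mul, sq_abs, ← Int.cast_abs, ← Int.sign_mul_self_eq_abs]
    push_cast
    ring
  have hsq := fourierC_mul_fourierC_neg u n
  rw [fourierC_iterate_deriv hper _ hu, habs]
  push_cast [id] at hsq ⊢
  rw [← hI, ← hsq]
  ring

/-- The Fourier multiplier of the quadratic form `Fmagic`: the modes `n` and `m` of `u`, where `m`
is the one that is differentiated twice, enter `Fmagic u` with the weight `magicKernel n m`. The `1`
comes from `-u u″` and the product of signs from the two Hilbert transforms. -/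
def magicKernel (n m : ℤ) : ℝ :=
  (1 - (n + m).sign * m.sign) * m ^ 2

theorem hasTrigSeries_Fmagic {u : ℝ → ℝ} (hu : ContDiff ℝ 3 u)
    (hper : Function.Periodic u (2 * π)) :
    HasTrigSeries (fun p : ℤ × ℤ => p.1 + p.2)
      (fun p => magicKernel p.1 p.2 * (fourierC u p.1 * fourierC u p.2)) (Fmagic u) := by
  have hseries := hasTrigSeries_fourierC (hu.of_le (by norm_num)) hper
  have hu₂ : ContDiff ℝ 1 (deriv (deriv u)) := ContDiff.iterate_deriv' 1 2 hu
  have hseries₂ := hasTrigSeries_fourierC hu₂ (periodic_deriv (periodic_deriv hper))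
  have hcoeff (m : ℤ) : fourierC (deriv (deriv u)) m = (I * m) ^ 2 * fourierC u m :=
    fourierC_iterate_deriv (k := 2) hper m (hu.of_le (by norm_num))
  have h : HasTrigSeries (fun p : ℤ × ℤ => p.1 + p.2) _ (Fmagic u) :=
    (hseries.mul hseries₂).neg.sub (hseries.mul hseries₂.hilbertT).hilbertT
  convert h using 1
  funext p
  simp only [hcoeff, magicKernel, id, mul_pow, Complex.I_sq]
  push_cast
  linear_combination (-(p.1 + p.2).sign * p.2.sign * p.2 ^ 2 * fourierC u p.1 * fourierC u p.2) *
    Complex.I_sq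

theorem magicKernel_nonneg (n m : ℤ) : 0 ≤ magicKernel n m := by
  refine mul_nonneg (sub_nonneg.2 ?_) (sq_nonneg _)
  rw [← Int.cast_mul, ← Int.sign_mul]
  rcases Int.sign_trichotomy ((n + m) * m) with h | h | h <;> simp [h]

theorem magicKernel_self (n : ℤ) : magicKernel n n = 0 := by
  rw [magicKernel, ← two_mul, Int.sign_mul, show Int.sign 2 = 1 from rfl, one_mul]
  rcases lt_trichotomy n 0 with h | rfl | h
  · simp [Int.sign_eq_neg_one_of_neg h]
  · simp
  · simp [Int.sign_eq_one_of_pos h]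

theorem magicKernel_neg_right (n : ℤ) : magicKernel n (-n) = n ^ 2 := by
  simp [magicKernel]

theorem magicKernel_neg_left (n : ℤ) : magicKernel (-n) n = n ^ 2 := by
  simp [magicKernel]

theorem sign_add_of_abs_lt {n m : ℤ} (h : |m| < |n|) : (n + m).sign = n.sign := by
  rcases lt_trichotomy n 0 with hn | rfl | hn
  · rw [abs_of_neg hn, abs_lt] at h
    rw [Int.sign_eq_neg_one_of_neg hn, Int.sign_eq_neg_one_of_neg (by lia)]
  · exact absurd (abs_nonneg m) (not_le_of_gt (by simpa using h))
  · rw [abs_of_pos hn, abs_lt] at h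
    rw [Int.sign_eq_one_of_pos hn, Int.sign_eq_one_of_pos (by lia)]

theorem magicKernel_of_abs_lt_abs {n m : ℤ} (h : |n| < |m|) : magicKernel n m = 0 := by
  have hm : m ≠ 0 := abs_pos.1 ((abs_nonneg n).trans_lt h)
  rw [magicKernel, add_comm, sign_add_of_abs_lt h]
  rcases hm.lt_or_gt with hm | hm
  · simp [Int.sign_eq_neg_one_of_neg hm]
  · simp [Int.sign_eq_one_of_pos hm]

theorem magicKernel_add_magicKernel_neg_left {n m : ℤ} (h : |m| < |n|) :
    magicKernel n m + magicKernel (-n) m = 2 * m ^ 2 := by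
  rw [magicKernel, magicKernel, sign_add_of_abs_lt h, sign_add_of_abs_lt (by rwa [abs_neg]),
    Int.sign_neg]
  push_cast
  ring

theorem sum_box_succ_magicKernel {x : ℤ → ℝ} (hx : x.Even) (N : ℕ) :
    ∑ n ∈ Finset.Icc (-(N + 1) : ℤ) (N + 1), ∑ m ∈ Finset.Icc (-(N + 1) : ℤ) (N + 1),
        magicKernel n m * (x n * x m) =
      2 * x (N + 1) * ((N + 1) ^ 2 * x (N + 1) + ∑ m ∈ Finset.Icc (-N : ℤ) N, m ^ 2 * x m) +
      ∑ n ∈ Finset.Icc (-N : ℤ) N, ∑ m ∈ Finset.Icc (-N : ℤ) N, magicKernel n m * (x n * x m) := by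
  have hlt {k : ℤ} (hk : k ∈ Finset.Icc (-N : ℤ) N) : |k| < |(N + 1 : ℤ)| := by
    rw [abs_of_pos (by lia : (0 : ℤ) < N + 1), abs_lt]
    grind
  have hrows : (∑ m ∈ Finset.Icc (-N : ℤ) N, magicKernel (N + 1) m * (x (N + 1) * x m)) +
      ∑ m ∈ Finset.Icc (-N : ℤ) N, magicKernel (-(N + 1)) m * (x (N + 1) * x m) =
        2 * x (N + 1) * ∑ m ∈ Finset.Icc (-N : ℤ) N, m ^ 2 * x m := by
    rw [← Finset.sum_add_distrib, Finset.mul_sum]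
    refine Finset.sum_congr rfl fun m hm => ?_
    rw [← add_mul, magicKernel_add_magicKernel_neg_left (hlt hm)]
    ring
  have hcolumns {n : ℤ} (hn : n ∈ Finset.Icc (-N : ℤ) N) :
      magicKernel n (N + 1) = 0 ∧ magicKernel n (-(N + 1)) = 0 :=
    ⟨magicKernel_of_abs_lt_abs (hlt hn), magicKernel_of_abs_lt_abs (by rw [abs_neg]; exact hlt hn)⟩
  have hinner : ∑ n ∈ Finset.Icc (-N : ℤ) N, ∑ m ∈ Finset.Icc (-(N + 1) : ℤ) (N + 1),
        magicKernel n m * (x n * x m) =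
      ∑ n ∈ Finset.Icc (-N : ℤ) N, ∑ m ∈ Finset.Icc (-N : ℤ) N, magicKernel n m * (x n * x m) :=
    Finset.sum_congr rfl fun n hn => by
      rw [Finset.sum_Icc_succ_eq_add_endpoints, (hcolumns hn).1, (hcolumns hn).2]
      ring
  rw [Finset.sum_Icc_succ_eq_add_endpoints, hinner, Finset.sum_Icc_succ_eq_add_endpoints,
    Finset.sum_Icc_succ_eq_add_endpoints]
  simp only [hx _, magicKernel_self, magicKernel_neg_left, magicKernel_neg_right]
  push_cast
  linear_combination hrows

theorem two_mul_sum_sq_mul_le (x : ℤ → ℝ) (y : ℝ) (N : ℕ) :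
    2 * y * ∑ m ∈ Finset.Icc (-N : ℤ) N, m ^ 2 * x m ≤
      2 * N * (N + 1) ^ 2 * y ^ 2 +
        ∑ m ∈ Finset.Icc (-N : ℤ) N, m ^ 4 / (N + 1 : ℝ) ^ 2 * x m ^ 2 := by
  have hamgm (m : ℤ) : 2 * y * (m ^ 2 * x m) ≤
      (N + 1) ^ 2 * y ^ 2 + m ^ 4 / (N + 1 : ℝ) ^ 2 * x m ^ 2 := by
    have := two_mul_le_add_sq ((N + 1) * y) (m ^ 2 * x m / (N + 1))
    field_simp at this ⊢
    linarith
  have hcard : ((Finset.Icc (-N : ℤ) N).erase 0).card = 2 * N := by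
    rw [Finset.card_erase_of_mem (by simp), Int.card_Icc]
    lia
  rw [Finset.mul_sum, ← Finset.sum_erase _ (a := (0 : ℤ)) (by simp),
    ← Finset.sum_erase (f := fun m : ℤ => m ^ 4 / (N + 1 : ℝ) ^ 2 * x m ^ 2) _ (a := 0) (by simp)]
  calc _ ≤ ∑ m ∈ (Finset.Icc (-N : ℤ) N).erase 0,
        ((N + 1) ^ 2 * y ^ 2 + m ^ 4 / (N + 1 : ℝ) ^ 2 * x m ^ 2) :=
      Finset.sum_le_sum fun m _ => hamgm m
    _ = _ := by
      rw [Finset.sum_add_distrib, Finset.sum_const, hcard, nsmul_eq_mul]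
      push_cast
      ring

-- The term `-n ^ 4 / N` makes the induction close: it pays for the error of
-- `two_mul_sum_sq_mul_le`, since `1 / (N + 1) ^ 2 ≤ 1 / N - 1 / (N + 1)`. For `N = 0` it is junk,
-- but then only `n = 0` occurs.
theorem sum_box_magicKernel_le {x : ℤ → ℝ} (hx : x.Even) (N : ℕ) :
    ∑ n ∈ Finset.Icc (-N : ℤ) N, ∑ m ∈ Finset.Icc (-N : ℤ) N, magicKernel n m * (x n * x m) ≤
      ∑ n ∈ Finset.Icc (-N : ℤ) N, (2 * |(n : ℝ)| ^ 3 - n ^ 4 / N) * x n ^ 2 := by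
  induction N with
  | zero => simp [magicKernel]
  | succ N ih =>
    have hgain : ∑ m ∈ Finset.Icc (-N : ℤ) N, m ^ 4 / (N + 1 : ℝ) ^ 2 * x m ^ 2 ≤
        ∑ m ∈ Finset.Icc (-N : ℤ) N, (m ^ 4 / N - m ^ 4 / (N + 1 : ℝ)) * x m ^ 2 := by
      refine Finset.sum_le_sum fun m hm => mul_le_mul_of_nonneg_right ?_ (sq_nonneg _)
      rcases N.eq_zero_or_pos with rfl | hN
      · have : m = 0 := by simpa using hm
        simp [this]
      · have hm4 : 0 ≤ (m : ℝ) ^ 4 := by positivity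
        field_simp
        linarith
    push_cast
    rw [sum_box_succ_magicKernel hx, Finset.sum_Icc_succ_eq_add_endpoints, hx]
    push_cast
    rw [abs_neg, abs_of_nonneg (by positivity : (0 : ℝ) ≤ N + 1), neg_pow]
    calc
      _ ≤ 2 * (N + 1) ^ 3 * x (N + 1) ^ 2 +
          ∑ m ∈ Finset.Icc (-N : ℤ) N, m ^ 4 / (N + 1 : ℝ) ^ 2 * x m ^ 2 +
          ∑ n ∈ Finset.Icc (-N : ℤ) N, (2 * |(n : ℝ)| ^ 3 - n ^ 4 / N) * x n ^ 2 := by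
        linarith [two_mul_sum_sq_mul_le x (x (N + 1)) N]
      _ ≤ 2 * (N + 1) ^ 3 * x (N + 1) ^ 2 +
          ∑ m ∈ Finset.Icc (-N : ℤ) N, (m ^ 4 / N - m ^ 4 / (N + 1 : ℝ)) * x m ^ 2 +
          ∑ n ∈ Finset.Icc (-N : ℤ) N, (2 * |(n : ℝ)| ^ 3 - n ^ 4 / N) * x n ^ 2 := by gcongr
      _ = _ := by
        rw [add_assoc, ← Finset.sum_add_distrib]
        congr 1
        · field_simp
          ring
        · exact Finset.sum_congr rfl fun n _ => by ring

theorem Fmagic_le_integral_hilbertT_mul_deriv {u : ℝ → ℝ} (hu : ContDiff ℝ 3 u)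
    (hper : Function.Periodic u (2 * π)) (θ : ℝ) :
    Fmagic u θ ≤ 1 / π * ∫ x in (0 : ℝ)..2 * π, hilbertT u x * deriv (deriv (deriv u)) x := by
  have hsum : HasSum (fun n : ℤ => 2 * |(n : ℝ)| ^ 3 * ‖fourierC u n‖ ^ 2)
      (1 / π * ∫ x in (0 : ℝ)..2 * π, hilbertT u x * deriv (deriv (deriv u)) x) := by
    refine ((hasSum_integral_hilbertT_mul_iterate_deriv (k := 1) hu hper).mul_left
      (1 / π)).congr_fun fun n => ?_
    field_simp
    ring
  refine (hasTrigSeries_Fmagic hu hper).le_of_sum_box_norm_le (fun N => ?_) θ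
  calc
    _ = ∑ n ∈ Finset.Icc (-N : ℤ) N, ∑ m ∈ Finset.Icc (-N : ℤ) N,
        magicKernel n m * (‖fourierC u n‖ * ‖fourierC u m‖) := by
      simp only [norm_mul, Complex.norm_real, Real.norm_of_nonneg (magicKernel_nonneg _ _)]
    _ ≤ ∑ n ∈ Finset.Icc (-N : ℤ) N, (2 * |(n : ℝ)| ^ 3 - n ^ 4 / N) * ‖fourierC u n‖ ^ 2 :=
      sum_box_magicKernel_le (x := fun n => ‖fourierC u n‖) (norm_fourierC_neg u) N
    _ ≤ ∑ n ∈ Finset.Icc (-N : ℤ) N, 2 * |(n : ℝ)| ^ 3 * ‖fourierC u n‖ ^ 2 := by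
      gcongr
      exact sub_le_self _ (by positivity)
    _ ≤ _ := sum_le_hasSum _ (fun n _ => by positivity) hsum

theorem neg_integral_hilbertT_mul_deriv_le {u : ℝ → ℝ} (hu : ContDiff ℝ 1 u)
    (hper : Function.Periodic u (2 * π)) :
    -∫ x in (0 : ℝ)..2 * π, hilbertT u x * deriv u x ≤ ∫ x in (0 : ℝ)..2 * π, deriv u x ^ 2 := by
  refine hasSum_le (fun n => ?_)
    (hasSum_integral_hilbertT_mul_iterate_deriv (k := 0) hu hper).neg
    (hasSum_sq_norm_fourierC hu.continuous_deriv_one)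
  have hle : |(n : ℝ)| ≤ |(n : ℝ)| ^ 2 := mod_cast Int.le_self_sq |n|
  have hnorm : ‖fourierC (deriv u) n‖ = |(n : ℝ)| * ‖fourierC u n‖ := by
    rw [fourierC_deriv hu hper, norm_mul, norm_mul, Complex.norm_I, one_mul, Complex.norm_intCast]
  rw [hnorm, mul_pow]
  calc
    _ = 2 * π * (|(n : ℝ)| * ‖fourierC u n‖ ^ 2) := by ring
    _ ≤ 2 * π * (|(n : ℝ)| ^ 2 * ‖fourierC u n‖ ^ 2) := by gcongr

end FourierAnalysis

theorem Fmagic_le_seminorms_general {u : ℝ → ℝ} (hu : ContDiff ℝ 3 u)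
    (hper : Function.Periodic u (2 * π)) (θ : ℝ) :
    Fmagic u θ ≤
      (1 / π) * (∫ x in (0 : ℝ)..2 * π,
          hilbertT u x * (deriv (deriv (deriv u)) x + deriv u x))
      + (π / 2) * ∫ x in (0 : ℝ)..2 * π, (deriv u x) ^ 2 := by
  have hu₁ : ContDiff ℝ 1 u := hu.of_le (by norm_num)
  have hH : Continuous (hilbertT u) := (hasTrigSeries_fourierC hu₁ hper).hilbertT.continuous
  have hu₃ : Continuous (deriv (deriv (deriv u))) := (ContDiff.iterate_deriv' 0 3 hu).continuous
  have hsplit : ∫ x in (0 : ℝ)..2 * π, hilbertT u x * (deriv (deriv (deriv u)) x + deriv u x) =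
      (∫ x in (0 : ℝ)..2 * π, hilbertT u x * deriv (deriv (deriv u)) x) +
        ∫ x in (0 : ℝ)..2 * π, hilbertT u x * deriv u x := by
    simp only [mul_add]
    exact intervalIntegral.integral_add ((hH.mul hu₃).intervalIntegrable _ _)
      ((hH.mul hu₁.continuous_deriv_one).intervalIntegrable _ _)
  have hpos : 0 ≤ ∫ x in (0 : ℝ)..2 * π, deriv u x ^ 2 :=
    intervalIntegral.integral_nonneg two_pi_pos.le fun _ _ => sq_nonneg _
  have hπ : 1 / π ≤ π / 2 := by
    rw [div_le_div_iff₀ pi_pos two_pos]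
    nlinarith [pi_gt_three]
  have hF := Fmagic_le_integral_hilbertT_mul_deriv hu hper θ
  have hlow := mul_le_mul_of_nonneg_left (neg_integral_hilbertT_mul_deriv_le hu₁ hper)
    (one_div_pos.2 pi_pos).le
  rw [hsplit]
  linarith [mul_le_mul_of_nonneg_right hπ hpos]

/-- Pointwise bound
`F(θ) ≤ (1/π) ‖u‖²_{Ḣ^{3/2}} + (π/2) ‖u‖²_{Ḣ¹}` for smooth mean-zero `u`. -/
theorem Fmagic_le_seminorms (u : ℝ → ℝ)
    (hu : ContDiff ℝ (⊤ : ℕ∞) u)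
    (hper : ∀ θ : ℝ, u (θ + 2 * π) = u θ)
    (hmean : (∫ θ in (0:ℝ)..(2 * π), u θ) = 0) :
    ∀ θ : ℝ, Fmagic u θ ≤
      (1 / π) * (∫ x in (0:ℝ)..(2 * π),
          hilbertT u x * (deriv (deriv (deriv u)) x + deriv u x))
      + (π / 2) * ∫ x in (0:ℝ)..(2 * π), (deriv u x) ^ 2 :=
  Fmagic_le_seminorms_general (mod_cast contDiff_infty.1 hu 3) hper
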